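/- arXiv:1711.00389 — 2 statements merged into one kernel-verified Lean document; each statement's English description precedes it below -/
import Mathlib

section
/- For every γ ∈ (0, 3), the limit lim_{T→∞} [−(1/T) · ∑_{n=1}^{⌊γT⌋} log sin(nπ/(3T))] = γ·log 2 + (3/(2π)) · ∑_{n=1}^∞ sin(2γnπ/3)/n² holds, where T ranges over positive integers; equivalently, the limit equals −(3/π)·∫_0^{γπ/3} log sin u du. -/
open scoped Real
open Filter

lemma aux_hasSum (r u : ℝ) (h0 : 0 ≤ r) (h1 : r < 1) :
    HasSum (fun n : ℕ => r ^ n * Real.cos (2 * n * u) / n)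
      (-(1 / 2) * Real.log ((1 - r) ^ 2 + 4 * r * Real.sin u ^ 2)) := by
  have hz : ‖(r : ℂ) * Complex.exp (((2 * u : ℝ) : ℂ) * Complex.I)‖ < 1 := by
    rw [norm_mul, Complex.norm_exp_ofReal_mul_I]
    simpa [abs_of_nonneg h0] using h1
  have h := Complex.hasSum_re (Complex.hasSum_taylorSeries_neg_log hz)
  convert h using 1
  · ext n
    rw [mul_pow, ← Complex.exp_nat_mul, Complex.div_natCast_re, ← Complex.ofReal_pow,
      Complex.re_ofReal_mul]
    congr 2
    rw [show (n : ℂ) * (((2 * u : ℝ) : ℂ) * Complex.I) = ((2 * n * u : ℝ) : ℂ) * Complex.I by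
      push_cast; ring, Complex.exp_ofReal_mul_I_re]
  · rw [Complex.neg_re, Complex.log_re]
    have : (1 - r) ^ 2 + 4 * r * Real.sin u ^ 2
        = ‖1 - (r : ℂ) * Complex.exp (((2 * u : ℝ) : ℂ) * Complex.I)‖ ^ 2 := by
      rw [← Complex.normSq_eq_norm_sq, Complex.normSq_apply]
      simp only [Complex.sub_re, Complex.sub_im, Complex.re_ofReal_mul, Complex.im_ofReal_mul,
        Complex.exp_ofReal_mul_I_re, Complex.exp_ofReal_mul_I_im, Complex.one_re, Complex.one_im]
      have h1 := Real.sin_sq_add_cos_sq (2 * u)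
      have h2 := Real.cos_two_mul u
      have h3 := Real.sin_sq_add_cos_sq u
      have h4 : Real.cos (2 * u) = 1 - 2 * Real.sin u ^ 2 := by linarith
      linear_combination (-r ^ 2) * h1 + (2 * r) * h4
    rw [this, Real.log_pow]
    push_cast
    ring

lemma aux_congr {f g : ℕ → ℝ} {a : ℝ} (h : HasSum f a) (e : ∀ n, f n = g n) :
    HasSum g a := by
  rwa [show g = f from funext fun n => (e n).symm]

lemma aux_hasSum_int (r x : ℝ) (h0 : 0 ≤ r) (h1 : r < 1) :
    HasSum (fun n : ℕ => r ^ n * (Real.sin (2 * n * x) / (2 * n ^ 2)))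
      (∫ u in (0 : ℝ)..x, -(1 / 2) * Real.log ((1 - r) ^ 2 + 4 * r * Real.sin u ^ 2)) := by
  have key := intervalIntegral.hasSum_integral_of_dominated_convergence
    (μ := MeasureTheory.volume) (a := 0) (b := x)
    (F := fun (n : ℕ) (u : ℝ) => r ^ n * Real.cos (2 * n * u) / n)
    (f := fun u => -(1 / 2) * Real.log ((1 - r) ^ 2 + 4 * r * Real.sin u ^ 2))
    (fun n _ => r ^ n) ?_ ?_ ?_ ?_ ?_
  · refine aux_congr key fun n => ?_
    rcases Nat.eq_zero_or_pos n with rfl | hn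
    · simp
    have hn' : (n : ℝ) ≠ 0 := by positivity
    rw [intervalIntegral.integral_div, intervalIntegral.integral_const_mul,
      intervalIntegral.integral_comp_mul_left (fun u => Real.cos u) (by positivity : (2 * n : ℝ) ≠ 0)]
    simp
    field_simp
  · intro n
    exact Continuous.aestronglyMeasurable (by fun_prop)
  · intro n
    refine MeasureTheory.ae_of_all _ fun t _ => ?_
    rcases Nat.eq_zero_or_pos n with rfl | hn
    · simp
    have hn' : (1 : ℝ) ≤ n := by exact_mod_cast hn
    rw [norm_div, norm_mul, Real.norm_eq_abs, Real.norm_eq_abs, Real.norm_eq_abs,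
      abs_of_nonneg (pow_nonneg h0 n), abs_of_nonneg (by positivity : (0 : ℝ) ≤ n)]
    rw [div_le_iff₀ (by linarith)]
    exact mul_le_mul_of_nonneg_left ((Real.abs_cos_le_one _).trans hn') (pow_nonneg h0 n)
  · exact MeasureTheory.ae_of_all _ fun t _ => summable_geometric_of_lt_one h0 h1
  · exact intervalIntegrable_const
  · exact MeasureTheory.ae_of_all _ fun t _ => aux_hasSum r t h0 h1

lemma aux_intlim (x : ℝ) (hx0 : 0 < x) (hx : x < π) :
    Tendsto (fun r : ℝ =>
      ∫ u in (0 : ℝ)..x, -(1 / 2) * Real.log ((1 - r) ^ 2 + 4 * r * Real.sin u ^ 2))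
      (nhdsWithin 1 (Set.Iio 1))
      (nhds (∫ u in (0 : ℝ)..x, (-Real.log 2 - Real.log (Real.sin u)))) := by
  have hmem : ∀ᶠ r : ℝ in nhdsWithin 1 (Set.Iio 1), 1 / 2 < r ∧ r < 1 := by
    have := Ioo_mem_nhdsLT (show (1 / 2 : ℝ) < 1 by norm_num)
    exact this
  have hint : IntervalIntegrable (fun u => Real.log (Real.sin u)) MeasureTheory.volume 0 x :=
    intervalIntegrable_log_sin
  have hsin : ∀ t ∈ Set.uIoc 0 x, 0 < Real.sin t := by
    intro t ht
    rw [Set.uIoc_of_le hx0.le] at ht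
    exact Real.sin_pos_of_pos_of_lt_pi ht.1 (ht.2.trans_lt hx)
  refine intervalIntegral.tendsto_integral_filter_of_dominated_convergence
    (fun u => Real.log 4 - Real.log (Real.sin u)) ?_ ?_ ?_ ?_
  · refine Eventually.of_forall fun r => Measurable.aestronglyMeasurable ?_
    fun_prop
  · filter_upwards [hmem] with r ⟨hr0, hr1⟩
    refine MeasureTheory.ae_of_all _ fun t ht => ?_
    have hs := hsin t ht
    have hs1 := Real.sin_le_one t
    set s := Real.sin t
    have hs2 : s ^ 2 ≤ 1 := by nlinarith
    have e1 : s ^ 2 ≤ (1 - r) ^ 2 + 4 * r * s ^ 2 := by nlinarith [sq_nonneg (1 - r), sq_nonneg s]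
    have e2 : (1 - r) ^ 2 + 4 * r * s ^ 2 ≤ 4 := by nlinarith
    have l1 := Real.log_le_log (by positivity) e1
    have l2 := Real.log_le_log (lt_of_lt_of_le (by positivity) e1) e2
    rw [Real.log_pow] at l1
    push_cast at l1
    have l3 : Real.log s ≤ 0 := Real.log_nonpos hs.le hs1
    have l4 : 0 ≤ Real.log 4 := Real.log_nonneg (by norm_num)
    rw [Real.norm_eq_abs, abs_le]
    constructor <;> linarith
  · exact intervalIntegrable_const.sub hint
  · refine MeasureTheory.ae_of_all _ fun t ht => ?_
    have hs := hsin t ht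
    have e : -Real.log 2 - Real.log (Real.sin t)
        = -(1 / 2) * Real.log ((1 - 1) ^ 2 + 4 * 1 * Real.sin t ^ 2) := by
      rw [show ((1 : ℝ) - 1) ^ 2 + 4 * 1 * Real.sin t ^ 2 = (2 * Real.sin t) ^ 2 by ring,
        Real.log_pow, Real.log_mul two_ne_zero hs.ne']
      push_cast; ring
    rw [e]
    have hc : ContinuousAt
        (fun r : ℝ => -(1 / 2) * Real.log ((1 - r) ^ 2 + 4 * r * Real.sin t ^ 2)) 1 := by
      refine ContinuousAt.mul continuousAt_const (ContinuousAt.log (by fun_prop) ?_)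
      have : 0 < Real.sin t ^ 2 := by positivity
      simp only [sub_self]
      positivity
    exact hc.tendsto.mono_left nhdsWithin_le_nhds

lemma aux_clausen (x : ℝ) (hx0 : 0 < x) (hx : x < π) :
    ∑' n : ℕ, Real.sin (2 * n * x) / (2 * (n : ℝ) ^ 2)
      = -(x * Real.log 2) - ∫ u in (0 : ℝ)..x, Real.log (Real.sin u) := by
  have hint : IntervalIntegrable (fun u => Real.log (Real.sin u)) MeasureTheory.volume 0 x :=
    intervalIntegrable_log_sin
  have h1 := aux_intlim x hx0 hx
  rw [intervalIntegral.integral_sub intervalIntegrable_const hint] at h1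
  have hmem : ∀ᶠ r : ℝ in nhdsWithin 1 (Set.Iio 1), 0 < r ∧ r < 1 := by
    have := Ioo_mem_nhdsLT (show (0 : ℝ) < 1 by norm_num)
    exact this
  have h2 : Tendsto (fun r : ℝ => ∑' n : ℕ, r ^ n * (Real.sin (2 * n * x) / (2 * (n : ℝ) ^ 2)))
      (nhdsWithin 1 (Set.Iio 1)) (nhds (∑' n : ℕ, Real.sin (2 * n * x) / (2 * (n : ℝ) ^ 2))) := by
    refine tendsto_tsum_of_dominated_convergence (bound := fun n : ℕ => 1 / (n : ℝ) ^ 2)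
      (Real.summable_one_div_nat_pow.mpr one_lt_two) ?_ ?_
    · intro n
      have hc : ContinuousAt
        (fun r : ℝ => r ^ n * (Real.sin (2 * n * x) / (2 * (n : ℝ) ^ 2))) 1 := by fun_prop
      have := hc.tendsto.mono_left (nhdsWithin_le_nhds (s := Set.Iio 1))
      simpa using this
    · filter_upwards [hmem] with r ⟨hr0, hr1⟩ n
      rcases Nat.eq_zero_or_pos n with rfl | hn
      · simp
      have hn' : (0 : ℝ) < n := by exact_mod_cast hn
      rw [norm_mul, norm_div, Real.norm_eq_abs, Real.norm_eq_abs, Real.norm_eq_abs,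
        abs_of_nonneg (pow_nonneg hr0.le n), abs_of_nonneg (by positivity : (0 : ℝ) ≤ 2 * n ^ 2)]
      have a1 := pow_le_one₀ (n := n) hr0.le hr1.le
      have a2 := Real.abs_sin_le_one (2 * n * x)
      calc r ^ n * (|Real.sin (2 * n * x)| / (2 * (n : ℝ) ^ 2))
          ≤ 1 * (1 / (1 * (n : ℝ) ^ 2)) := by gcongr; norm_num
        _ = _ := by simp
  have h3 := tendsto_nhds_unique (h2.congr' ?_) h1
  · rw [h3]; simp
  · filter_upwards [hmem] with r ⟨hr0, hr1⟩
    exact (aux_hasSum_int r x hr0.le hr1).tsum_eq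

lemma aux_riemann (γ : ℝ) (h0 : 0 < γ) (h3 : γ < 3) :
    Tendsto (fun T : ℕ => (π / (3 * (T : ℝ))) *
        ∑ n ∈ Finset.Icc 1 (Nat.floor (γ * (T : ℝ))), Real.log (Real.sin ((n : ℝ) * π / (3 * T))))
      atTop (nhds (∫ u in (0 : ℝ)..(γ * π / 3), Real.log (Real.sin u))) := by
  have hpi := Real.pi_pos
  set x := γ * π / 3 with hx_def
  have hx0 : 0 < x := by positivity
  have hx : x < π := by rw [hx_def]; nlinarith
  have hint : IntervalIntegrable (fun u => Real.log (Real.sin u)) MeasureTheory.volume 0 x :=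
    intervalIntegrable_log_sin
  let h : ℕ → ℝ := fun T => π / (3 * (T : ℝ))
  let N : ℕ → ℕ := fun T => Nat.floor (γ * (T : ℝ))
  let G : ℕ → ℕ → ℝ := fun T k => if k ≤ N T then Real.log (Real.sin (k * h T)) else 0
  let F : ℕ → ℝ → ℝ := fun T u => G T (Nat.ceil (u / h T))
  have hh : ∀ T : ℕ, 0 < T → 0 < h T := by
    intro T hT
    have : (0 : ℝ) < T := by exact_mod_cast hT
    simp only [h]; positivity
  have hxh : ∀ T : ℕ, 0 < T → x = γ * T * h T := by
    intro T hT
    have : (0 : ℝ) < T := by exact_mod_cast hT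
    simp only [h, hx_def]; field_simp
  have hNx : ∀ T : ℕ, 0 < T → N T * h T ≤ x := by
    intro T hT
    rw [hxh T hT]
    exact mul_le_mul_of_nonneg_right (Nat.floor_le (by positivity)) (hh T hT).le
  have hmeas : ∀ T, Measurable (F T) := fun T =>
    (measurable_from_nat (f := G T)).comp (Nat.measurable_ceil.comp (by fun_prop))
  -- the sum is an integral of a step function
  have hsum : ∀ T : ℕ, 0 < T → ∫ u in (0 : ℝ)..x, F T u = h T *
      ∑ n ∈ Finset.Icc 1 (N T), Real.log (Real.sin ((n : ℝ) * π / (3 * T))) := by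
    intro T hT
    have hhT := hh T hT
    have e1 : ∀ k : ℕ, k < N T → Set.EqOn (fun _ => Real.log (Real.sin (((k + 1 : ℕ) : ℝ) * h T)))
        (F T) (Set.uIoo ((k : ℝ) * h T) (((k + 1 : ℕ) : ℝ) * h T)) := by
      intro k hk u hu
      have hle : (k : ℝ) * h T ≤ ((k + 1 : ℕ) : ℝ) * h T := by
        push_cast; nlinarith
      rw [Set.uIoo_of_le hle] at hu
      have hc : Nat.ceil (u / h T) = k + 1 := by
        rw [Nat.ceil_eq_iff (by omega)]
        rw [lt_div_iff₀ hhT, div_le_iff₀ hhT]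
        exact ⟨by simpa using hu.1, hu.2.le⟩
      simp only [F, G, hc]
      rw [if_pos (by omega)]
    have e2 : Set.EqOn (fun _ => (0 : ℝ)) (F T) (Set.uIoo ((N T : ℝ) * h T) x) := by
      intro u hu
      rw [Set.uIoo_of_le (hNx T hT)] at hu
      have hc : N T < Nat.ceil (u / h T) := by
        rw [Nat.lt_ceil, lt_div_iff₀ hhT]
        exact hu.1
      simp only [F, G]
      rw [if_neg (by omega)]
    have i1 : ∀ k < N T, IntervalIntegrable (F T) MeasureTheory.volume
        ((fun k : ℕ => (k : ℝ) * h T) k) ((fun k : ℕ => (k : ℝ) * h T) (k + 1)) := fun k hk =>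
      intervalIntegrable_const.congr_uIoo (e1 k hk)
    have i2 : IntervalIntegrable (F T) MeasureTheory.volume ((N T : ℝ) * h T) x :=
      intervalIntegrable_const.congr_uIoo e2
    have i3 := IntervalIntegrable.trans_iterate i1
    have s1 := intervalIntegral.sum_integral_adjacent_intervals i1
    simp only [Nat.cast_zero, zero_mul] at i3 s1
    rw [← intervalIntegral.integral_add_adjacent_intervals i3 i2,
      ← intervalIntegral.integral_congr_uIoo e2, ← s1, intervalIntegral.integral_zero, add_zero,
      ← Finset.Ico_succ_right_eq_Icc, Finset.sum_Ico_eq_sum_range, Finset.mul_sum]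
    refine Finset.sum_congr (by simp) fun k hk => ?_
    rw [Finset.mem_range] at hk
    rw [← intervalIntegral.integral_congr_uIoo (e1 k (by simpa using hk)),
      intervalIntegral.integral_const, smul_eq_mul]
    have : ((k + 1 : ℕ) : ℝ) * h T = ((1 + k : ℕ) : ℝ) * π / (3 * T) := by
      simp only [h]; push_cast; ring
    rw [← this]
    push_cast; ring
  have hlim : Tendsto (fun T : ℕ => ∫ u in (0 : ℝ)..x, F T u) atTop
      (nhds (∫ u in (0 : ℝ)..x, Real.log (Real.sin u))) := by
    refine intervalIntegral.tendsto_integral_filter_of_dominated_convergence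
      (fun u => -Real.log (Real.sin u) - Real.log (Real.sin x)) ?_ ?_ ?_ ?_
    · exact Eventually.of_forall fun T => (hmeas T).aestronglyMeasurable
    · filter_upwards [eventually_gt_atTop 0] with T hT
      refine MeasureTheory.ae_of_all _ fun u hu => ?_
      rw [Set.uIoc_of_le hx0.le] at hu
      have hhT := hh T hT
      have su : 0 < Real.sin u := Real.sin_pos_of_pos_of_lt_pi hu.1 (hu.2.trans_lt hx)
      have sx : 0 < Real.sin x := Real.sin_pos_of_pos_of_lt_pi hx0 hx
      have lu : Real.log (Real.sin u) ≤ 0 := Real.log_nonpos su.le (Real.sin_le_one _)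
      have lx : Real.log (Real.sin x) ≤ 0 := Real.log_nonpos sx.le (Real.sin_le_one _)
      simp only [F, G]
      split_ifs with hc
      · set v := (Nat.ceil (u / h T) : ℝ) * h T with hv
        have v1 : u ≤ v := by
          rw [hv, ← div_le_iff₀ hhT]; exact Nat.le_ceil _
        have v2 : v ≤ x := by
          refine le_trans ?_ (hNx T hT)
          exact mul_le_mul_of_nonneg_right (by exact_mod_cast hc) hhT.le
        have sv : 0 < Real.sin v :=
          Real.sin_pos_of_pos_of_lt_pi (hu.1.trans_le v1) (v2.trans_lt hx)
        have lv : Real.log (Real.sin v) ≤ 0 := Real.log_nonpos sv.le (Real.sin_le_one _)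
        have hmin : min (Real.sin u) (Real.sin x) ≤ Real.sin v := by
          refine strictConcaveOn_sin_Icc.concaveOn.min_le_of_mem_Icc
            ⟨hu.1.le, (hu.2.trans_lt hx).le⟩ ⟨hx0.le, hx.le⟩ ⟨v1, v2⟩
        rw [Real.norm_eq_abs, abs_of_nonpos lv]
        rcases min_le_iff.mp hmin with hm | hm
        · have := Real.log_le_log su hm
          linarith
        · have := Real.log_le_log sx hm
          linarith
      · rw [norm_zero]; linarith
    · exact hint.neg.sub intervalIntegrable_const
    · filter_upwards [MeasureTheory.Measure.ae_ne MeasureTheory.volume x] with u hne hu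
      rw [Set.uIoc_of_le hx0.le] at hu
      have hux : u < x := lt_of_le_of_ne hu.2 hne
      have su : 0 < Real.sin u := Real.sin_pos_of_pos_of_lt_pi hu.1 (hux.trans hx)
      have hh0 : Tendsto h atTop (nhds 0) := by
        have := tendsto_const_div_atTop_nhds_zero_nat (π / 3)
        refine this.congr fun T => ?_
        simp only [h]; rw [div_div]
      have hv : Tendsto (fun T => (Nat.ceil (u / h T) : ℝ) * h T) atTop (nhds u) := by
        have up : Tendsto (fun T => u + h T) atTop (nhds u) := by
          simpa using tendsto_const_nhds.add hh0
        refine tendsto_of_tendsto_of_tendsto_of_le_of_le' tendsto_const_nhds up ?_ ?_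
        · filter_upwards [eventually_gt_atTop 0] with T hT
          rw [← div_le_iff₀ (hh T hT)]; exact Nat.le_ceil _
        · filter_upwards [eventually_gt_atTop 0] with T hT
          have hhT := hh T hT
          have := (Nat.ceil_lt_add_one (div_nonneg hu.1.le hhT.le)).le
          calc (Nat.ceil (u / h T) : ℝ) * h T ≤ (u / h T + 1) * h T :=
                mul_le_mul_of_nonneg_right this hhT.le
            _ = u + h T := by field_simp
      have hg : Tendsto (fun T => Real.log (Real.sin ((Nat.ceil (u / h T) : ℝ) * h T))) atTop
          (nhds (Real.log (Real.sin u))) :=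
        ((Real.continuous_sin.continuousAt.log su.ne').tendsto).comp hv
      refine hg.congr' ?_
      have hsmall : ∀ᶠ T in atTop, h T < x - u := hh0.eventually_lt_const (by linarith)
      filter_upwards [eventually_gt_atTop 0, hsmall] with T hT hs
      have hhT := hh T hT
      simp only [F, G]
      rw [if_pos]
      rw [Nat.ceil_le, div_le_iff₀ hhT]
      have : γ * T < N T + 1 := Nat.lt_floor_add_one _
      have h5 := hxh T hT
      nlinarith
  refine hlim.congr' ?_
  filter_upwards [eventually_gt_atTop 0] with T hT
  exact hsum T hT

/-- Asymptotic evaluation of `A_{2T}(γ) = ∏_{n=1}^{⌊γT⌋} sin(nπ/(3T))`: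
`lim_{T→∞} [−(1/T)·∑_{n=1}^{⌊γT⌋} log sin(nπ/(3T))] = γ log 2 + (3/(2π)) ∑_{n≥1} sin(2γnπ/3)/n²`,
and this limit equals `−(3/π)·∫₀^{γπ/3} log sin u du`. -/
theorem log_sin_product_asymptotics (γ : ℝ) (h0 : 0 < γ) (h3 : γ < 3) :
    Tendsto (fun T : ℕ => -(1 / (T : ℝ)) *
        ∑ n ∈ Finset.Icc 1 (Nat.floor (γ * (T : ℝ))), Real.log (Real.sin ((n : ℝ) * π / (3 * T))))
      atTop
      (nhds (γ * Real.log 2 +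
        3 / (2 * π) * ∑' n : ℕ, Real.sin (2 * γ * ((n : ℝ) + 1) * π / 3) / ((n : ℝ) + 1) ^ 2)) ∧
    γ * Real.log 2 +
        3 / (2 * π) * (∑' n : ℕ, Real.sin (2 * γ * ((n : ℝ) + 1) * π / 3) / ((n : ℝ) + 1) ^ 2)
      = -(3 / π) * ∫ u in (0 : ℝ)..(γ * π / 3), Real.log (Real.sin u) := by
  have hpi := Real.pi_pos
  have hx0 : 0 < γ * π / 3 := by positivity
  have hx : γ * π / 3 < π := by nlinarith
  have key := aux_clausen (γ * π / 3) hx0 hx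
  have hs : Summable fun n : ℕ =>
      Real.sin (2 * n * (γ * π / 3)) / (2 * (n : ℝ) ^ 2) := by
    refine Summable.of_norm_bounded (g := fun n : ℕ => 1 / (n : ℝ) ^ 2)
      (Real.summable_one_div_nat_pow.mpr one_lt_two) fun n => ?_
    rcases Nat.eq_zero_or_pos n with rfl | hn
    · simp
    have hn' : (0 : ℝ) < n := by exact_mod_cast hn
    rw [norm_div, Real.norm_eq_abs, Real.norm_eq_abs,
      abs_of_nonneg (by positivity : (0 : ℝ) ≤ 2 * n ^ 2)]
    have a2 := Real.abs_sin_le_one (2 * n * (γ * π / 3))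
    calc |Real.sin (2 * n * (γ * π / 3))| / (2 * (n : ℝ) ^ 2)
        ≤ 1 / (1 * (n : ℝ) ^ 2) := by gcongr; norm_num
      _ = _ := by simp
  have h2 : γ * Real.log 2 +
        3 / (2 * π) * (∑' n : ℕ, Real.sin (2 * γ * ((n : ℝ) + 1) * π / 3) / ((n : ℝ) + 1) ^ 2)
      = -(3 / π) * ∫ u in (0 : ℝ)..(γ * π / 3), Real.log (Real.sin u) := by
    rw [hs.tsum_eq_zero_add] at key
    have e : ∀ n : ℕ, Real.sin (2 * ((n + 1 : ℕ) : ℝ) * (γ * π / 3)) / (2 * ((n + 1 : ℕ) : ℝ) ^ 2)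
        = (1 / 2) * (Real.sin (2 * γ * ((n : ℝ) + 1) * π / 3) / ((n : ℝ) + 1) ^ 2) := by
      intro n
      have hn : ((n : ℝ) + 1) ≠ 0 := by positivity
      push_cast
      rw [show 2 * ((n : ℝ) + 1) * (γ * π / 3) = 2 * γ * ((n : ℝ) + 1) * π / 3 by ring]
      field_simp
    simp only [e, tsum_mul_left] at key
    simp only [Nat.cast_zero, mul_zero, zero_mul, Real.sin_zero, zero_div, zero_add] at key
    generalize (∑' n : ℕ, Real.sin (2 * γ * ((n : ℝ) + 1) * π / 3) / ((n : ℝ) + 1) ^ 2) = S at *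
    have hI : ∫ u in (0 : ℝ)..(γ * π / 3), Real.log (Real.sin u)
        = -(γ * π / 3 * Real.log 2) - 1 / 2 * S := by linarith
    rw [hI]
    field_simp
    ring
  refine ⟨?_, h2⟩
  rw [h2]
  refine ((aux_riemann γ h0 h3).const_mul (-(3 / π))).congr fun T => ?_
  rw [← mul_assoc]
  congr 1
  rcases Nat.eq_zero_or_pos T with rfl | hT
  · simp
  have hT' : (0 : ℝ) < T := by exact_mod_cast hT
  field_simp
end

section
/- As (s,v) → (1,0), the rate function satisfies the Taylor expansion I(s,v) = (√3 π/36)·(s−1−3v)² − (√3 π³/5832)·[5(s−1)⁴ + 36v(s−1)³ − 162v²(s−1)² + 36v³(s−1) − 27v⁴] − (√3 π⁵/524880)·[29(s−1)⁶ + 198v(s−1)⁵ − 1485v²(s−1)⁴ + 660v³(s−1)³ − 1485v⁴(s−1)² + 198v⁵(s−1) − 99v⁶] + O(|s−1|⁸ + |v|⁸); that is, there exist C > 0 and δ > 0 such that the difference between I(s,v) and the displayed polynomial is bounded by C(|s−1|⁸ + |v|⁸) whenever |s−1| < δ and |v| < δ. -/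
open scoped Real

/-- The rate function `I(s,v)` in its integral representation. -/
noncomputable def rateI (s v : ℝ) : ℝ :=
  3 * (∫ φ in (0 : ℝ)..((1 - s - v) / 6),
        Real.log (Real.sin (π * (φ + 1 / 6)) / Real.sin (π * (1 / 6 - φ)))) +
  6 * (∫ φ in (0 : ℝ)..((1 - s + v) / 6),
        Real.log (Real.sin (π * (φ + 1 / 6)) / Real.sin (π * (1 / 6 - φ)))) +
  6 * (∫ φ in (0 : ℝ)..((1 - s) / 3),
        Real.log (Real.cos (π * (φ + 1 / 6)) / Real.cos (π * (1 / 6 - φ))))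

/-- Sixth order bound for cosine. -/
lemma cos_six (y : ℝ) (hy : |y| ≤ 1) :
    |Real.cos y - (1 - y ^ 2 / 2 + y ^ 4 / 24)| ≤ y ^ 6 := by
  have h := Complex.exp_bound (x := (y : ℂ) * Complex.I) (by simpa using hy)
    (n := 6) (by norm_num)
  have h2 := (Complex.abs_re_le_norm _).trans h
  have e : (Complex.exp ((y : ℂ) * Complex.I) -
      ∑ m ∈ Finset.range 6, ((y : ℂ) * Complex.I) ^ m / (m.factorial : ℂ)).re
      = Real.cos y - (1 - y ^ 2 / 2 + y ^ 4 / 24) := by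
    have : (∑ m ∈ Finset.range 6, ((y : ℂ) * Complex.I) ^ m / (m.factorial : ℂ))
        = ((1 - y ^ 2 / 2 + y ^ 4 / 24 : ℝ) : ℂ)
          + ((y - y ^ 3 / 6 + y ^ 5 / 120 : ℝ) : ℂ) * Complex.I := by
      have i2 := Complex.I_sq
      have i3 : Complex.I ^ 3 = - Complex.I := by rw [pow_succ, i2]; ring
      have i4 : Complex.I ^ 4 = 1 := Complex.I_pow_four
      have i5 : Complex.I ^ 5 = Complex.I := by rw [pow_succ, i4]; ring
      simp only [Finset.sum_range_succ, Finset.sum_range_zero, mul_pow, i2, i3, i4, i5,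
        Nat.factorial]
      push_cast
      ring
    rw [this, Complex.sub_re, Complex.exp_ofReal_mul_I_re, Complex.add_re, Complex.ofReal_re,
      Complex.re_ofReal_mul, Complex.I_re]
    ring
  rw [e] at h2
  refine h2.trans ?_
  have : ‖(y : ℂ) * Complex.I‖ = |y| := by simp
  rw [this]
  have h6 : |y| ^ 6 = y ^ 6 := by
    rw [← abs_pow, abs_of_nonneg (by positivity)]
  rw [h6]
  have h0 : 0 ≤ y ^ 6 := by positivity
  norm_num [Nat.factorial]
  nlinarith

lemma inv_bound_minus (y : ℝ) (hy : y ^ 2 ≤ 1 / 4) :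
    |1 / (Real.cos y - 1 / 2) - 2 * (1 + y ^ 2 + 11 / 12 * y ^ 4)| ≤ 100 * y ^ 6 := by
  have hy1 : |y| ≤ 1 := by
    rw [← sq_le_one_iff_abs_le_one]; linarith
  have hc := cos_six y hy1
  have hD : 1 / 4 ≤ Real.cos y - 1 / 2 := by
    have := Real.one_sub_sq_div_two_le_cos (x := y); linarith
  set D := Real.cos y - 1 / 2 with hDd
  set e := Real.cos y - (1 - y ^ 2 / 2 + y ^ 4 / 24) with he
  have hDe : D = 1 / 2 - y ^ 2 / 2 + y ^ 4 / 24 + e := by rw [hDd, he]; ring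
  have e1 : 1 / D - 2 * (1 + y ^ 2 + 11 / 12 * y ^ 4)
      = (y ^ 6 * (5 / 6 - 11 / 144 * y ^ 2) - e * (2 * (1 + y ^ 2 + 11 / 12 * y ^ 4))) / D := by
    have : D ≠ 0 := by linarith
    rw [eq_div_iff this, sub_mul, one_div, inv_mul_cancel₀ this, hDe]; ring
  have h0 : 0 ≤ y ^ 2 := by positivity
  have h6 : 0 ≤ y ^ 6 := by positivity
  have h4 : y ^ 4 ≤ 1 := by nlinarith
  have h40 : 0 ≤ y ^ 4 := by positivity
  rw [e1, abs_div, abs_of_pos (by linarith : 0 < D), div_le_iff₀ (by linarith)]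
  have hA : |y ^ 6 * (5 / 6 - 11 / 144 * y ^ 2)| ≤ y ^ 6 * 1 := by
    rw [abs_mul, abs_of_nonneg h6]
    gcongr
    rw [abs_le]; constructor <;> linarith
  have hB : |e * (2 * (1 + y ^ 2 + 11 / 12 * y ^ 4))| ≤ y ^ 6 * 6 := by
    rw [abs_mul]
    gcongr
    rw [abs_le]; constructor <;> linarith
  have := abs_sub (y ^ 6 * (5 / 6 - 11 / 144 * y ^ 2)) (e * (2 * (1 + y ^ 2 + 11 / 12 * y ^ 4)))
  nlinarith

lemma inv_bound_plus (y : ℝ) (hy : y ^ 2 ≤ 1 / 4) :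
    |1 / (Real.cos y + 1 / 2) - 2 * (1 / 3 + y ^ 2 / 9 + y ^ 4 / 36)| ≤ 100 * y ^ 6 := by
  have hy1 : |y| ≤ 1 := by
    rw [← sq_le_one_iff_abs_le_one]; linarith
  have hc := cos_six y hy1
  have hD : 1 / 4 ≤ Real.cos y + 1 / 2 := by
    have := Real.one_sub_sq_div_two_le_cos (x := y); linarith
  set D := Real.cos y + 1 / 2 with hDd
  set e := Real.cos y - (1 - y ^ 2 / 2 + y ^ 4 / 24) with he
  have hDe : D = 3 / 2 - y ^ 2 / 2 + y ^ 4 / 24 + e := by rw [hDd, he]; ring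
  have e1 : 1 / D - 2 * (1 / 3 + y ^ 2 / 9 + y ^ 4 / 36)
      = (y ^ 6 * (1 / 54 - 1 / 432 * y ^ 2) - e * (2 * (1 / 3 + y ^ 2 / 9 + y ^ 4 / 36))) / D := by
    have : D ≠ 0 := by linarith
    rw [eq_div_iff this, sub_mul, one_div, inv_mul_cancel₀ this, hDe]; ring
  have h0 : 0 ≤ y ^ 2 := by positivity
  have h6 : 0 ≤ y ^ 6 := by positivity
  have h4 : y ^ 4 ≤ 1 := by nlinarith
  have h40 : 0 ≤ y ^ 4 := by positivity
  rw [e1, abs_div, abs_of_pos (by linarith : 0 < D), div_le_iff₀ (by linarith)]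
  have hA : |y ^ 6 * (1 / 54 - 1 / 432 * y ^ 2)| ≤ y ^ 6 * 1 := by
    rw [abs_mul, abs_of_nonneg h6]
    gcongr
    rw [abs_le]; constructor <;> linarith
  have hB : |e * (2 * (1 / 3 + y ^ 2 / 9 + y ^ 4 / 36))| ≤ y ^ 6 * 6 := by
    rw [abs_mul]
    gcongr
    rw [abs_le]; constructor <;> linarith
  have := abs_sub (y ^ 6 * (1 / 54 - 1 / 432 * y ^ 2)) (e * (2 * (1 / 3 + y ^ 2 / 9 + y ^ 4 / 36)))
  nlinarith

/-- Integrating a sixth order bound on the derivative twice. -/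
lemma integral_bound (f f' : ℝ → ℝ) (c0 c1 c2 K r : ℝ) (hK : 0 ≤ K)
    (hf0 : f 0 = 0) (hf : ∀ x, |x| ≤ r → HasDerivAt f (f' x) x)
    (hb : ∀ x, |x| ≤ r → |f' x - (c0 + c1 * x ^ 2 + c2 * x ^ 4)| ≤ K * x ^ 6)
    (x : ℝ) (hx : |x| ≤ r) :
    |(∫ t in (0 : ℝ)..x, f t) - (c0 * x ^ 2 / 2 + c1 * x ^ 4 / 12 + c2 * x ^ 6 / 30)|
      ≤ K * |x| ^ 8 := by
  have habs : ∀ t ∈ Set.uIcc 0 x, |t| ≤ |x| := by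
    intro t ht
    have := Set.abs_sub_left_of_mem_uIcc ht
    simpa using this
  have key : ∀ t, |t| ≤ r → |f t - (c0 * t + c1 * t ^ 3 / 3 + c2 * t ^ 5 / 5)| ≤ K * |t| ^ 7 := by
    intro t ht
    have hlt : ∀ u ∈ Set.uIcc 0 t, |u| ≤ |t| := by
      intro u hu
      have := Set.abs_sub_left_of_mem_uIcc hu
      simpa using this
    have hd : ∀ u ∈ Set.uIcc 0 t,
        HasDerivWithinAt (fun u => f u - (c0 * u + c1 * u ^ 3 / 3 + c2 * u ^ 5 / 5))
          (f' u - (c0 + c1 * u ^ 2 + c2 * u ^ 4)) (Set.uIcc 0 t) u := by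
      intro u hu
      have h1 := hf u ((hlt u hu).trans ht)
      have h2 : HasDerivAt (fun u : ℝ => c0 * u + c1 * u ^ 3 / 3 + c2 * u ^ 5 / 5)
          (c0 + c1 * u ^ 2 + c2 * u ^ 4) u := by
        have := (((hasDerivAt_id u).const_mul c0).add
          (((hasDerivAt_pow 3 u).const_mul c1).div_const 3)).add
          (((hasDerivAt_pow 5 u).const_mul c2).div_const 5)
        refine (this.congr_deriv ?_)
        norm_num; ring
      exact (h1.sub h2).hasDerivWithinAt
    have hbd : ∀ u ∈ Set.uIcc 0 t,
        ‖f' u - (c0 + c1 * u ^ 2 + c2 * u ^ 4)‖ ≤ K * |t| ^ 6 := by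
      intro u hu
      have h1 := hb u ((hlt u hu).trans ht)
      have h2 := hlt u hu
      rw [Real.norm_eq_abs]
      refine h1.trans ?_
      have : u ^ 6 = |u| ^ 6 := by rw [← abs_pow, abs_of_nonneg (by positivity)]
      rw [this]
      gcongr
    have := (convex_uIcc (0:ℝ) t).norm_image_sub_le_of_norm_hasDerivWithin_le hd hbd
      Set.left_mem_uIcc Set.right_mem_uIcc
    simp only [hf0, Real.norm_eq_abs] at this
    norm_num at this
    calc _ ≤ _ := this
      _ = _ := by ring
  have hfc : ContinuousOn f (Set.uIcc 0 x) := fun t ht =>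
    (hf t ((habs t ht).trans hx)).continuousAt.continuousWithinAt
  have hpc : Continuous (fun t : ℝ => c0 * t + c1 * t ^ 3 / 3 + c2 * t ^ 5 / 5) := by fun_prop
  have hpi : (∫ t in (0 : ℝ)..x, (c0 * t + c1 * t ^ 3 / 3 + c2 * t ^ 5 / 5))
      = c0 * x ^ 2 / 2 + c1 * x ^ 4 / 12 + c2 * x ^ 6 / 30 := by
    have : ∀ u ∈ Set.uIcc 0 x, HasDerivAt
        (fun u : ℝ => c0 * u ^ 2 / 2 + c1 * u ^ 4 / 12 + c2 * u ^ 6 / 30)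
        (c0 * u + c1 * u ^ 3 / 3 + c2 * u ^ 5 / 5) u := by
      intro u _
      have := ((((hasDerivAt_pow 2 u).const_mul c0).div_const 2).add
          (((hasDerivAt_pow 4 u).const_mul c1).div_const 12)).add
          (((hasDerivAt_pow 6 u).const_mul c2).div_const 30)
      refine (this.congr_deriv ?_)
      norm_num; ring
    rw [intervalIntegral.integral_eq_sub_of_hasDerivAt this (hpc.intervalIntegrable _ _)]
    ring
  rw [← hpi, ← intervalIntegral.integral_sub hfc.intervalIntegrable (hpc.intervalIntegrable _ _)]
  have := intervalIntegral.norm_integral_le_of_norm_le_const (a := 0) (b := x) (C := K * |x| ^ 7)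
    (f := fun t => f t - (c0 * t + c1 * t ^ 3 / 3 + c2 * t ^ 5 / 5)) (by
      intro t ht
      have h1 := habs t (Set.uIoc_subset_uIcc ht)
      rw [Real.norm_eq_abs]
      refine (key t (h1.trans hx)).trans ?_
      gcongr)
  rw [Real.norm_eq_abs] at this
  refine this.trans (le_of_eq ?_)
  simp only [sub_zero]; ring

lemma small_sq (x : ℝ) (hx : |x| ≤ 1 / 20) : (2 * π * x) ^ 2 ≤ 1 / 4 := by
  have hp := Real.pi_lt_four
  have hp0 := Real.pi_pos
  have : |2 * π * x| ≤ 1 / 2 := by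
    rw [abs_mul, abs_of_pos (by positivity)]
    nlinarith [abs_nonneg x]
  have := sq_le_sq' (abs_le.mp this).1 (abs_le.mp this).2
  linarith

lemma ranges (x : ℝ) (hx : |x| ≤ 1 / 20) :
    0 < π * (x + 1 / 6) ∧ π * (x + 1 / 6) < π / 2 ∧ 0 < π * (1 / 6 - x) ∧
      π * (1 / 6 - x) < π / 2 := by
  obtain ⟨h1, h2⟩ := abs_le.mp hx
  have hp0 := Real.pi_pos
  refine ⟨?_, ?_, ?_, ?_⟩ <;> nlinarith

lemma cos_a (x : ℝ) : Real.cos (π * (x + 1 / 6) + π * (1 / 6 - x)) = 1 / 2 := by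
  rw [← Real.cos_pi_div_three]; congr 1; ring

lemma sin_a (x : ℝ) : Real.sin (π * (x + 1 / 6) + π * (1 / 6 - x)) = √3 / 2 := by
  rw [← Real.sin_pi_div_three]; congr 1; ring

lemma cos_b (x : ℝ) : Real.cos (π * (x + 1 / 6) - π * (1 / 6 - x)) = Real.cos (2 * π * x) := by
  congr 1; ring

lemma deriv_logsin (x : ℝ) (hx : |x| ≤ 1 / 20) :
    HasDerivAt (fun φ : ℝ => Real.log (Real.sin (π * (φ + 1 / 6)) / Real.sin (π * (1 / 6 - φ))))
      (π * √3 * (1 / (Real.cos (2 * π * x) - 1 / 2))) x := by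
  obtain ⟨h1, h2, h3, h4⟩ := ranges x hx
  have hp0 := Real.pi_pos
  have s1 : 0 < Real.sin (π * (x + 1 / 6)) := Real.sin_pos_of_pos_of_lt_pi h1 (by linarith)
  have s2 : 0 < Real.sin (π * (1 / 6 - x)) := Real.sin_pos_of_pos_of_lt_pi h3 (by linarith)
  have d1 : HasDerivAt (fun φ : ℝ => π * (φ + 1 / 6)) π x := by
    simpa using ((hasDerivAt_id x).add_const (1 / 6 : ℝ)).const_mul π
  have d2 : HasDerivAt (fun φ : ℝ => π * (1 / 6 - φ)) (-π) x := by
    simpa using ((hasDerivAt_id x).const_sub (1 / 6 : ℝ)).const_mul π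
  refine ((d1.sin.div d2.sin s2.ne').log (div_pos s1 s2).ne').congr_deriv ?_
  have ca := cos_a x
  have sa := sin_a x
  have cb := cos_b x
  rw [Real.cos_add] at ca
  rw [Real.sin_add] at sa
  rw [Real.cos_sub] at cb
  have hD : Real.cos (2 * π * x) - 1 / 2
      = 2 * (Real.sin (π * (x + 1 / 6)) * Real.sin (π * (1 / 6 - x))) := by
    rw [← cb]; linarith
  have h3 : √3 = 2 * (Real.sin (π * (x + 1 / 6)) * Real.cos (π * (1 / 6 - x)) +
    Real.cos (π * (x + 1 / 6)) * Real.sin (π * (1 / 6 - x))) := by linarith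
  clear ca sa cb
  rw [hD, h3]
  simp only [Pi.div_apply]
  generalize Real.sin (π * (x + 1 / 6)) = S at s1 ⊢
  generalize Real.sin (π * (1 / 6 - x)) = S' at s2 ⊢
  field_simp
  ring

lemma deriv_logcos (x : ℝ) (hx : |x| ≤ 1 / 20) :
    HasDerivAt (fun φ : ℝ => Real.log (Real.cos (π * (φ + 1 / 6)) / Real.cos (π * (1 / 6 - φ))))
      (-(π * √3) * (1 / (Real.cos (2 * π * x) + 1 / 2))) x := by
  obtain ⟨h1, h2, h3, h4⟩ := ranges x hx
  have hp0 := Real.pi_pos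
  have s1 : 0 < Real.cos (π * (x + 1 / 6)) := Real.cos_pos_of_mem_Ioo ⟨by linarith, h2⟩
  have s2 : 0 < Real.cos (π * (1 / 6 - x)) := Real.cos_pos_of_mem_Ioo ⟨by linarith, h4⟩
  have d1 : HasDerivAt (fun φ : ℝ => π * (φ + 1 / 6)) π x := by
    simpa using ((hasDerivAt_id x).add_const (1 / 6 : ℝ)).const_mul π
  have d2 : HasDerivAt (fun φ : ℝ => π * (1 / 6 - φ)) (-π) x := by
    simpa using ((hasDerivAt_id x).const_sub (1 / 6 : ℝ)).const_mul π
  refine ((d1.cos.div d2.cos s2.ne').log (div_pos s1 s2).ne').congr_deriv ?_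
  have ca := cos_a x
  have sa := sin_a x
  have cb := cos_b x
  rw [Real.cos_add] at ca
  rw [Real.sin_add] at sa
  rw [Real.cos_sub] at cb
  have hD : Real.cos (2 * π * x) + 1 / 2
      = 2 * (Real.cos (π * (x + 1 / 6)) * Real.cos (π * (1 / 6 - x))) := by
    rw [← cb]; linarith
  have h3 : √3 = 2 * (Real.sin (π * (x + 1 / 6)) * Real.cos (π * (1 / 6 - x)) +
    Real.cos (π * (x + 1 / 6)) * Real.sin (π * (1 / 6 - x))) := by linarith
  clear ca sa cb
  rw [hD, h3]
  simp only [Pi.div_apply]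
  generalize Real.cos (π * (x + 1 / 6)) = S at s1 ⊢
  generalize Real.cos (π * (1 / 6 - x)) = S' at s2 ⊢
  field_simp
  ring

lemma int_sin (x : ℝ) (hx : |x| ≤ 1 / 20) :
    |(∫ φ in (0 : ℝ)..x,
        Real.log (Real.sin (π * (φ + 1 / 6)) / Real.sin (π * (1 / 6 - φ)))) -
      √3 * (π * x ^ 2 + 2 / 3 * π ^ 3 * x ^ 4 + 44 / 45 * π ^ 5 * x ^ 6)|
      ≤ (6400 * π ^ 7 * √3) * |x| ^ 8 := by
  have := integral_bound _ _ (2 * π * √3) (8 * π ^ 3 * √3) (88 / 3 * π ^ 5 * √3)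
    (6400 * π ^ 7 * √3) (1 / 20) (by positivity) (by norm_num) deriv_logsin (by
      intro x hx
      have h := inv_bound_minus _ (small_sq x hx)
      have e : π * √3 * (1 / (Real.cos (2 * π * x) - 1 / 2)) -
          (2 * π * √3 + 8 * π ^ 3 * √3 * x ^ 2 + 88 / 3 * π ^ 5 * √3 * x ^ 4)
          = π * √3 * (1 / (Real.cos (2 * π * x) - 1 / 2) -
            2 * (1 + (2 * π * x) ^ 2 + 11 / 12 * (2 * π * x) ^ 4)) := by ring
      rw [e, abs_mul, abs_of_nonneg (by positivity)]
      calc _ ≤ π * √3 * (100 * (2 * π * x) ^ 6) := by gcongr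
        _ = _ := by ring) x hx
  refine le_trans (le_of_eq ?_) this
  congr 1; ring

lemma int_cos (x : ℝ) (hx : |x| ≤ 1 / 20) :
    |(∫ φ in (0 : ℝ)..x,
        Real.log (Real.cos (π * (φ + 1 / 6)) / Real.cos (π * (1 / 6 - φ)))) -
      -(√3 * (π * x ^ 2 / 3 + 2 / 27 * π ^ 3 * x ^ 4 + 4 / 135 * π ^ 5 * x ^ 6))|
      ≤ (6400 * π ^ 7 * √3) * |x| ^ 8 := by
  have := integral_bound _ _ (-(2 / 3 * π * √3)) (-(8 / 9 * π ^ 3 * √3))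
    (-(8 / 9 * π ^ 5 * √3))
    (6400 * π ^ 7 * √3) (1 / 20) (by positivity) (by norm_num) deriv_logcos (by
      intro x hx
      have h := inv_bound_plus _ (small_sq x hx)
      have e : -(π * √3) * (1 / (Real.cos (2 * π * x) + 1 / 2)) -
          (-(2 / 3 * π * √3) + -(8 / 9 * π ^ 3 * √3) * x ^ 2 + -(8 / 9 * π ^ 5 * √3) * x ^ 4)
          = -(π * √3 * (1 / (Real.cos (2 * π * x) + 1 / 2) -
            2 * (1 / 3 + (2 * π * x) ^ 2 / 9 + (2 * π * x) ^ 4 / 36))) := by ring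
      rw [e, abs_neg, abs_mul, abs_of_nonneg (by positivity)]
      calc _ ≤ π * √3 * (100 * (2 * π * x) ^ 6) := by gcongr
        _ = _ := by ring) x hx
  refine le_trans (le_of_eq ?_) this
  congr 1; ring

/-- The sixth-order Taylor expansion of the rate function `I(s,v)` around `(s,v) = (1,0)`:
`I(s,v) = (√3 π/36)(s−1−3v)² − (√3 π³/5832)[…] − (√3 π⁵/524880)[…] + O(|s−1|⁸ + |v|⁸)`. -/
theorem rateI_taylor_expansion :
    ∃ C : ℝ, 0 < C ∧ ∃ δ : ℝ, 0 < δ ∧ ∀ s v : ℝ, |s - 1| < δ → |v| < δ →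
      |rateI s v -
        (Real.sqrt 3 * π / 36 * (s - 1 - 3 * v) ^ 2 -
          Real.sqrt 3 * π ^ 3 / 5832 *
            (5 * (s - 1) ^ 4 + 36 * v * (s - 1) ^ 3 - 162 * v ^ 2 * (s - 1) ^ 2 +
              36 * v ^ 3 * (s - 1) - 27 * v ^ 4) -
          Real.sqrt 3 * π ^ 5 / 524880 *
            (29 * (s - 1) ^ 6 + 198 * v * (s - 1) ^ 5 - 1485 * v ^ 2 * (s - 1) ^ 4 +
              660 * v ^ 3 * (s - 1) ^ 3 - 1485 * v ^ 4 * (s - 1) ^ 2 +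
              198 * v ^ 5 * (s - 1) - 99 * v ^ 6))|
        ≤ C * (|s - 1| ^ 8 + |v| ^ 8) := by
  refine ⟨15 * (6400 * π ^ 7 * √3), by positivity, 1 / 20, by norm_num, ?_⟩
  intro s v hs hv
  set K := 6400 * π ^ 7 * √3 with hK
  have hK0 : 0 ≤ K := by positivity
  set m := max |s - 1| |v| with hm
  have hm0 : 0 ≤ m := (abs_nonneg v).trans (le_max_right _ _)
  have hm1 : |s - 1| ≤ m := le_max_left _ _
  have hm2 : |v| ≤ m := le_max_right _ _
  have hmr : m ≤ 1 / 20 := max_le hs.le hv.le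
  have hm8 : m ^ 8 ≤ |s - 1| ^ 8 + |v| ^ 8 := by
    have a1 : 0 ≤ |s - 1| ^ 8 := by positivity
    have a2 : 0 ≤ |v| ^ 8 := by positivity
    rcases max_choice |s - 1| |v| with h | h <;> rw [hm, h] <;> linarith
  obtain ⟨p1, p2⟩ := abs_le.mp hm1
  obtain ⟨q1, q2⟩ := abs_le.mp hm2
  have b1 : |(1 - s - v) / 6| ≤ m := by rw [abs_le]; constructor <;> linarith
  have b2 : |(1 - s + v) / 6| ≤ m := by rw [abs_le]; constructor <;> linarith
  have b3 : |(1 - s) / 3| ≤ m := by rw [abs_le]; constructor <;> linarith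
  have i1 := (int_sin _ (b1.trans hmr)).trans
    (mul_le_mul_of_nonneg_left (pow_le_pow_left₀ (abs_nonneg _) b1 8) hK0)
  have i2 := (int_sin _ (b2.trans hmr)).trans
    (mul_le_mul_of_nonneg_left (pow_le_pow_left₀ (abs_nonneg _) b2 8) hK0)
  have i3 := (int_cos _ (b3.trans hmr)).trans
    (mul_le_mul_of_nonneg_left (pow_le_pow_left₀ (abs_nonneg _) b3 8) hK0)
  have hKm := mul_le_mul_of_nonneg_left hm8 hK0
  unfold rateI
  generalize (∫ φ in (0 : ℝ)..((1 - s - v) / 6),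
        Real.log (Real.sin (π * (φ + 1 / 6)) / Real.sin (π * (1 / 6 - φ)))) = A at *
  generalize (∫ φ in (0 : ℝ)..((1 - s + v) / 6),
        Real.log (Real.sin (π * (φ + 1 / 6)) / Real.sin (π * (1 / 6 - φ)))) = B at *
  generalize (∫ φ in (0 : ℝ)..((1 - s) / 3),
        Real.log (Real.cos (π * (φ + 1 / 6)) / Real.cos (π * (1 / 6 - φ)))) = G at *
  rw [abs_le] at i1 i2 i3 ⊢
  obtain ⟨i1, j1⟩ := i1
  obtain ⟨i2, j2⟩ := i2
  obtain ⟨i3, j3⟩ := i3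
  constructor
  · linear_combination 3 * i1 + 6 * i2 + 6 * i3 + 15 * hKm
  · linear_combination 3 * j1 + 6 * j2 + 6 * j3 + 15 * hKm
end
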